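/- arXiv:2111.07399 — 8 statements merged into one kernel-verified Lean document; each statement's English description precedes it below -/
import Mathlib

section
/- Let c : ℕ → ℕ → ℝ be a family of scalars with K := sup_{i ∈ ℕ} ∑_k |c_{ki}|² < ∞. Then for all v, w ∈ ℓ²(ℕ), the sequence u defined by u_k = ∑_i v_i w_i c_{ki} is a well-defined element of ℓ²(ℕ), and ‖u‖ ≤ √K ‖v‖ ‖w‖; in particular, for each fixed v the left multiplication operator w ↦ u is a bounded linear operator on ℓ²(ℕ). -/
/-!
The hypothesis says that the columns `C i = (c k i)_k` are vectors of ℓ² with `‖C i‖ ≤ √K`.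
By Cauchy–Schwarz `∑ |v i * w i| ≤ ‖v‖ ‖w‖`, so the series `∑ (v i * w i) • C i` converges
absolutely in ℓ², and its sum `u` satisfies `‖u‖ ≤ √K ‖v‖ ‖w‖`
(`exists_hasSum_smul_of_norm_le`). Evaluation at a coordinate is a continuous linear functional,
hence commutes with the sum, so the coordinates of `u` are the required series. The bound for
fixed `v`, together with the evident linearity in `w`, gives the bounded operator.
-/

noncomputable section
open scoped ENNReal

/-- The real Hilbert space ℓ²(ℕ) of square-summable sequences. -/
abbrev l2 : Type := lp (fun _ : ℕ => ℝ) 2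

/-- If `C` is a norm-bounded sequence in ℓ², then `∑ i, (v i * w i) • C i` converges in ℓ². -/
lemma exists_hasSum_smul_of_norm_le (C : ℕ → l2) (B : ℝ) (hC : ∀ i, ‖C i‖ ≤ B) (v w : l2) :
    ∃ u : l2, HasSum (fun i => (v i * w i) • C i) u ∧ ‖u‖ ≤ B * ‖v‖ * ‖w‖ := by
  have hpq : (2 : ℝ≥0∞).toReal.HolderConjugate (2 : ℝ≥0∞).toReal := by
    simpa using Real.HolderConjugate.two_two
  have hB : 0 ≤ B := (norm_nonneg _).trans (hC 0)
  have hs : Summable fun i => B * (‖v i‖ * ‖w i‖) := (lp.summable_mul hpq v w).mul_left B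
  have hle : ∀ i, ‖(v i * w i) • C i‖ ≤ B * (‖v i‖ * ‖w i‖) := fun i => by
    rw [norm_smul, norm_mul, mul_comm B]
    exact mul_le_mul_of_nonneg_left (hC i) (by positivity)
  refine ⟨_, (Summable.of_norm_bounded hs hle).hasSum, ?_⟩
  refine (tsum_of_norm_bounded hs.hasSum hle).trans ?_
  rw [tsum_mul_left, mul_assoc]
  exact mul_le_mul_of_nonneg_left (lp.tsum_mul_le_mul_norm hpq v w).2 hB

/-- if the structure constants satisfy `K := sup_i ∑_k |c_{ki}|² < ∞`, then the
evolution-algebra product `u_k = ∑_i v_i w_i c_{ki}` of any `v, w ∈ ℓ²` is a well-defined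
element of `ℓ²` with `‖u‖ ≤ √K ‖v‖ ‖w‖`; in particular every left multiplication is a
bounded linear operator on `ℓ²`. -/
theorem product_welldefined_of_bounded_columns
    (c : ℕ → ℕ → ℝ) (K : ℝ)
    (hcol : ∀ i, Summable fun k => |c k i| ^ 2)
    (hbdd : BddAbove (Set.range fun i => ∑' k, |c k i| ^ 2))
    (hK : K = ⨆ i, ∑' k, |c k i| ^ 2) :
    (∀ v w : l2,
      ∃ u : l2,
        (∀ k, Summable fun i => v i * w i * c k i) ∧
        (∀ k, u k = ∑' i, v i * w i * c k i) ∧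
        ‖u‖ ≤ Real.sqrt K * ‖v‖ * ‖w‖) ∧
    (∀ v : l2, ∃ L : l2 →L[ℝ] l2,
      ∀ (w : l2) (k : ℕ), L w k = ∑' i, v i * w i * c k i) := by
  have hmem : ∀ i, Memℓp (fun k => c k i) 2 := fun i =>
    memℓp_gen (by simpa using hcol i)
  let C : ℕ → l2 := fun i => ⟨fun k => c k i, hmem i⟩
  have hK0 : 0 ≤ K := hK ▸ Real.iSup_nonneg fun i => tsum_nonneg fun k => by positivity
  have hC : ∀ i, ‖C i‖ ≤ Real.sqrt K := fun i => by
    refine lp.norm_le_of_tsum_le (by simp) (Real.sqrt_nonneg K) ?_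
    have h : ∑' k, |c k i| ^ 2 ≤ K := hK ▸ le_ciSup hbdd i
    simpa [C, Real.sq_sqrt hK0] using h
  have hcoord : ∀ {v w u : l2}, HasSum (fun i => (v i * w i) • C i) u →
      ∀ k, HasSum (fun i => v i * w i * c k i) (u k) := fun hu k =>
    (lp.evalCLM ℝ (fun _ : ℕ => ℝ) 2 k).hasSum hu
  choose m hm hmle using exists_hasSum_smul_of_norm_le C (Real.sqrt K) hC
  refine ⟨fun v w => ⟨m v w, fun k => (hcoord (hm v w) k).summable,
    fun k => (hcoord (hm v w) k).tsum_eq.symm, hmle v w⟩, fun v => ?_⟩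
  let T : l2 →ₗ[ℝ] l2 :=
    { toFun := m v
      map_add' := fun x y => by
        refine (hm v (x + y)).unique ?_
        simpa [mul_add, add_smul] using (hm v x).add (hm v y)
      map_smul' := fun a x => by
        refine (hm v (a • x)).unique ?_
        simpa [smul_smul, mul_left_comm] using (hm v x).const_smul a }
  exact ⟨T.mkContinuous (Real.sqrt K * ‖v‖) (hmle v),
    fun w k => (hcoord (hm v w) k).tsum_eq.symm⟩
end
end

section
/- Let G be a locally finite graph on ℕ. The product (v ⋆ w)_k = ∑_i v_i w_i a_{ki} maps every pair v, w ∈ ℓ²(ℕ) to a well-defined element of ℓ²(ℕ) with every left multiplication L_v : w ↦ v ⋆ w a bounded linear operator on ℓ²(ℕ), if and only if G has uniformly bounded degree. -/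
/-!
Let `c i ∈ ℓ²` be the `i`-th column of the adjacency matrix, so `‖c i‖² = deg i` because the
entries are `0` or `1`, and formally `v ⋆ w = ∑ i, (v i * w i) • c i`.

If the degrees are bounded by `M`, then `‖c i‖ ≤ √M`, so by Cauchy–Schwarz this series converges
absolutely in `ℓ²` with `‖v ⋆ w‖ ≤ √M ‖v‖ ‖w‖`.

Conversely, evaluating a bounded `L_v` at the basis vector `e_i` gives `L_v e_i = v i • c i`, hence
`|v i| ‖c i‖ ≤ ‖L_v‖` for all `i`. The functionals `v ↦ ‖c i‖ * v i` are therefore pointwise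
bounded, hence uniformly bounded by the Banach–Steinhaus theorem, and evaluating them at `e_i`
bounds `‖c i‖ = √(deg i)`.
-/

noncomputable section
open scoped ENNReal

/-- The degree of vertex `i` in the graph with adjacency coefficients `a`. -/
def deg (a : ℕ → ℕ → ℝ) (i : ℕ) : ℝ := ∑' k, a k i

/-- The columns of a locally finite adjacency matrix, as elements of `ℓ²`. -/
lemma exists_column (a : ℕ → ℕ → ℝ) (hval : ∀ k i, a k i = 0 ∨ a k i = 1)
    (hlf : ∀ i, Summable fun k => a k i) :
    ∃ c : ℕ → l2, (∀ i k, c i k = a k i) ∧ ∀ i, ‖c i‖ ^ 2 = deg a i := by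
  have hsq : ∀ k i, ‖a k i‖ ^ (2 : ℝ≥0∞).toReal = a k i := by
    intro k i
    rcases hval k i with h | h <;> simp [h]
  have hmem : ∀ i, Memℓp (fun k => a k i) 2 := by
    intro i
    refine memℓp_gen ?_
    simpa only [hsq] using hlf i
  refine ⟨fun i => ⟨fun k => a k i, hmem i⟩, fun i k => rfl, fun i => ?_⟩
  have h := lp.norm_rpow_eq_tsum (p := 2) (by simp) (⟨fun k => a k i, hmem i⟩ : l2)
  simp only [hsq] at h
  simpa [deg] using h

/-- If the columns are bounded by `C`, then `v ⋆ w = ∑ i, (v i * w i) • c i` converges absolutely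
in `ℓ²`, with `‖v ⋆ w‖ ≤ C ‖v‖ ‖w‖` by Cauchy–Schwarz. -/
lemma bounded_of_column_bound (a : ℕ → ℕ → ℝ) (c : ℕ → l2) (hc : ∀ i k, c i k = a k i)
    (C : ℝ) (hC : ∀ i, ‖c i‖ ≤ C) (v : l2) :
    ∃ L : l2 →L[ℝ] l2, ∀ (w : l2) (k : ℕ),
        (Summable fun i => v i * w i * a k i) ∧ L w k = ∑' i, v i * w i * a k i := by
  have hhol : (2 : ℝ≥0∞).toReal.HolderConjugate (2 : ℝ≥0∞).toReal := by
    simpa using Real.HolderConjugate.two_two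
  have hC0 : 0 ≤ C := (norm_nonneg _).trans (hC 0)
  have hle : ∀ (w : l2) i, ‖(v i * w i) • c i‖ ≤ ‖v i‖ * ‖w i‖ * C := by
    intro w i
    rw [norm_smul, norm_mul]
    exact mul_le_mul_of_nonneg_left (hC i) (by positivity)
  have hvw : ∀ w : l2, Summable fun i => ‖v i‖ * ‖w i‖ * C := fun w =>
    (lp.summable_mul hhol v w).mul_right C
  have hs : ∀ w : l2, Summable fun i => (v i * w i) • c i := fun w =>
    Summable.of_norm_bounded (hvw w) (hle w)
  let L₀ : l2 →ₗ[ℝ] l2 :=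
    { toFun := fun w => ∑' i, (v i * w i) • c i
      map_add' := fun w w' => by
        rw [← (hs w).tsum_add (hs w')]
        refine tsum_congr fun i => ?_
        rw [lp.coeFn_add, Pi.add_apply, mul_add, add_smul]
      map_smul' := fun r w => by
        rw [RingHom.id_apply, ← (hs w).tsum_const_smul r]
        refine tsum_congr fun i => ?_
        rw [lp.coeFn_smul, Pi.smul_apply, smul_smul, smul_eq_mul, mul_left_comm] }
  refine ⟨L₀.mkContinuous (C * ‖v‖) fun w => ?_, fun w k => ?_⟩
  · calc ‖∑' i, (v i * w i) • c i‖ ≤ ∑' i, ‖v i‖ * ‖w i‖ * C :=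
          tsum_of_norm_bounded (hvw w).hasSum (hle w)
      _ = (∑' i, ‖v i‖ * ‖w i‖) * C := tsum_mul_right
      _ ≤ (‖v‖ * ‖w‖) * C :=
          mul_le_mul_of_nonneg_right (lp.tsum_mul_le_mul_norm' hhol v w) hC0
      _ = C * ‖v‖ * ‖w‖ := by ring
  · -- Coordinates are continuous, so they may be taken termwise in the series.
    have h := (lp.evalCLM ℝ (fun _ : ℕ => ℝ) 2 k).hasSum (hs w).hasSum
    have h' : HasSum (fun i => v i * w i * a k i) ((∑' i, (v i * w i) • c i : l2) k) := by
      simp_rw [← hc]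
      exact h
    exact ⟨h'.summable, h'.tsum_eq.symm⟩

/-- Boundedness of each single `L_v` bounds the columns uniformly, by the Banach–Steinhaus theorem
for the functionals `v ↦ ‖c i‖ * v i`. -/
lemma column_bound_of_bounded (a : ℕ → ℕ → ℝ) (c : ℕ → l2) (hc : ∀ i k, c i k = a k i)
    (H : ∀ v : l2, ∃ L : l2 →L[ℝ] l2, ∀ (w : l2) (k : ℕ),
        (Summable fun i => v i * w i * a k i) ∧ L w k = ∑' i, v i * w i * a k i) :
    ∃ C, ∀ i, ‖c i‖ ≤ C := by
  let φ : ℕ → l2 →L[ℝ] ℝ := fun i => ‖c i‖ • lp.evalCLM ℝ (fun _ : ℕ => ℝ) 2 i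
  have hφ : ∀ i (v : l2), φ i v = ‖c i‖ * v i := fun i v => rfl
  have hnorm : ∀ i, ‖(lp.single 2 i (1 : ℝ) : l2)‖ = 1 := fun i => by
    rw [lp.norm_single (by simp)]; simp
  obtain ⟨C, hC⟩ : ∃ C, ∀ i, ‖φ i‖ ≤ C := by
    refine banach_steinhaus fun v => ?_
    obtain ⟨L, hL⟩ := H v
    refine ⟨‖L‖, fun i => ?_⟩
    have hLi : L (lp.single 2 i (1 : ℝ)) = v i • c i := by
      ext k
      rw [(hL _ k).2, tsum_eq_single i]
      · simp [hc]
      · intro j hj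
        simp [hj]
    have := L.le_opNorm (lp.single 2 i (1 : ℝ))
    rw [hLi, hnorm, mul_one, norm_smul] at this
    rw [hφ, norm_mul, norm_norm, mul_comm]
    exact this
  refine ⟨C, fun i => ?_⟩
  have h := (φ i).le_opNorm (lp.single 2 i (1 : ℝ))
  rw [hnorm, mul_one, hφ] at h
  have h1 : ‖c i‖ ≤ ‖φ i‖ := by simpa using h
  exact h1.trans (hC i)

/-- for a locally finite simple graph on ℕ, the evolution-algebra product
`(v ⋆ w)_k = ∑_i v_i w_i a_{ki}` maps every pair `v, w ∈ ℓ²` to a well-defined element of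
`ℓ²`, with every left multiplication `L_v` a bounded linear operator on `ℓ²`, if and only if
the graph has uniformly bounded degree. -/
theorem evolution_algebra_welldefined_iff_unif_bounded_degree
    (a : ℕ → ℕ → ℝ)
    (hval : ∀ k i, a k i = 0 ∨ a k i = 1)
    (hsym : ∀ k i, a k i = a i k)
    (hloop : ∀ i, a i i = 0)
    (hlf : ∀ i, Summable fun k => a k i) :
    ((∀ v : l2, ∃ L : l2 →L[ℝ] l2, ∀ (w : l2) (k : ℕ),
        (Summable fun i => v i * w i * a k i) ∧ L w k = ∑' i, v i * w i * a k i) ↔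
      ∃ M > 0, ∀ i, deg a i ≤ M) := by
  obtain ⟨c, hc, hdeg⟩ := exists_column a hval hlf
  constructor
  · intro H
    obtain ⟨C, hC⟩ := column_bound_of_bounded a c hc H
    refine ⟨C ^ 2 + 1, by positivity, fun i => ?_⟩
    rw [← hdeg i]
    have := pow_le_pow_left₀ (norm_nonneg _) (hC i) 2
    linarith
  · rintro ⟨M, -, hM⟩ v
    refine bounded_of_column_bound a c hc (Real.sqrt M) (fun i => ?_) v
    exact Real.le_sqrt_of_sq_le ((hdeg i).trans_le (hM i))
end
end

section
/- Let G be a locally finite graph on ℕ with deg(i) ≥ 1 for all i. Then the structure constants c_{ki} = a_{ki}/deg(i) satisfy sup_i ∑_k |c_{ki}|² ≤ 1; consequently, for all v, w ∈ ℓ²(ℕ) the sequence (v ∘ w) with (v ∘ w)_k = ∑_i v_i w_i a_{ki}/deg(i) is a well-defined element of ℓ²(ℕ) with ‖v ∘ w‖ ≤ ‖v‖ ‖w‖, so every left multiplication L_v : w ↦ v ∘ w is a bounded linear operator on ℓ²(ℕ). -/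
/-!
Each column `c_i = (a_{ki}/deg(i))_k` of structure constants lies in the unit ball of `ℓ²`: the
coefficients are `0` or `1`, so `∑_k |c_{ki}|² = ∑_k a_{ki}/deg(i)² = 1/deg(i) ≤ 1`
(`hasSum_sq_col`). For `v, w ∈ ℓ²` the Cauchy-Schwarz inequality gives
`∑_i |v_i w_i| ≤ ‖v‖ ‖w‖`, so the series `v ∘ w = ∑_i v_i w_i c_i` converges absolutely in `ℓ²`
with norm at most `‖v‖ ‖w‖`. Coordinates are continuous linear functionals, hence they can be
taken term by term, which yields the pointwise formula (`exists_product`). Linearity of `L_v` is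
then checked coordinatewise.
-/

noncomputable section
open scoped ENNReal

/-- The squares of the structure constants out of a vertex sum to `1/deg(i)`, because
`a_{ki}² = a_{ki}`. -/
lemma hasSum_sq_col (a : ℕ → ℕ → ℝ) (hval : ∀ k i, a k i = 0 ∨ a k i = 1)
    (hlf : ∀ i, Summable fun k => a k i) (hdeg : ∀ i, 1 ≤ deg a i) (i : ℕ) :
    HasSum (fun k => |a k i / deg a i| ^ 2) (1 / deg a i) := by
  have hpos : 0 < deg a i := one_pos.trans_le (hdeg i)
  have h : HasSum (fun k => a k i) (deg a i) := (hlf i).hasSum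
  have hfun : (fun k => |a k i / deg a i| ^ 2) = fun k => a k i / deg a i ^ 2 := by
    funext k
    rcases hval k i with h | h <;> simp [h]
  have hlim : 1 / deg a i = deg a i / deg a i ^ 2 := by field_simp
  rw [hfun, hlim]
  exact h.div_const _

lemma tsum_sq_col_le_one (a : ℕ → ℕ → ℝ) (hval : ∀ k i, a k i = 0 ∨ a k i = 1)
    (hlf : ∀ i, Summable fun k => a k i) (hdeg : ∀ i, 1 ≤ deg a i) (i : ℕ) :
    ∑' k, |a k i / deg a i| ^ 2 ≤ 1 := by
  rw [(hasSum_sq_col a hval hlf hdeg i).tsum_eq, div_le_one (one_pos.trans_le (hdeg i))]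
  exact hdeg i

lemma exists_col (a : ℕ → ℕ → ℝ) (hval : ∀ k i, a k i = 0 ∨ a k i = 1)
    (hlf : ∀ i, Summable fun k => a k i) (hdeg : ∀ i, 1 ≤ deg a i) (i : ℕ) :
    ∃ c : l2, (∀ k, c k = a k i / deg a i) ∧ ‖c‖ ≤ 1 := by
  have hmem : Memℓp (fun k => a k i / deg a i) 2 := by
    apply memℓp_gen
    simpa [← abs_div] using (hasSum_sq_col a hval hlf hdeg i).summable
  refine ⟨⟨_, hmem⟩, fun k => rfl, ?_⟩
  apply lp.norm_le_of_tsum_le (by simp) zero_le_one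
  simpa [← abs_div] using tsum_sq_col_le_one a hval hlf hdeg i

/-- The product `v ∘ w`, obtained as the absolutely convergent series `∑_i v_i w_i c_i` of
columns in `ℓ²`. -/
lemma exists_product (a : ℕ → ℕ → ℝ) (hval : ∀ k i, a k i = 0 ∨ a k i = 1)
    (hlf : ∀ i, Summable fun k => a k i) (hdeg : ∀ i, 1 ≤ deg a i) (v w : l2) :
    ∃ u : l2,
      (∀ k, Summable fun i => v i * w i * (a k i / deg a i)) ∧
      (∀ k, u k = ∑' i, v i * w i * (a k i / deg a i)) ∧
      ‖u‖ ≤ ‖v‖ * ‖w‖ := by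
  choose c hc hc1 using exists_col a hval hlf hdeg
  obtain ⟨hs, hle⟩ := lp.tsum_mul_le_mul_norm
    (by simpa using Real.HolderConjugate.two_two) v w
  have hterm : ∀ i, ‖(v i * w i) • c i‖ ≤ ‖v i‖ * ‖w i‖ := fun i => by
    rw [norm_smul, norm_mul]
    exact mul_le_of_le_one_right (by positivity) (hc1 i)
  have hsum : Summable fun i => (v i * w i) • c i := Summable.of_norm_bounded hs hterm
  have hcoord : ∀ k, HasSum (fun i => v i * w i * (a k i / deg a i))
      ((∑' i, (v i * w i) • c i : l2) k) := fun k => by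
    have := (lp.evalCLM ℝ (fun _ : ℕ => ℝ) 2 k).hasSum hsum.hasSum
    simpa [lp.evalCLM, hc] using this
  exact ⟨∑' i, (v i * w i) • c i, fun k => (hcoord k).summable,
    fun k => (hcoord k).tsum_eq.symm, (tsum_of_norm_bounded hs.hasSum hterm).trans hle⟩

/-- for a locally finite simple graph on ℕ with all degrees at least 1, the
random-walk structure constants `c_{ki} = a_{ki}/deg(i)` satisfy `sup_i ∑_k |c_{ki}|² ≤ 1`;
consequently the product `(v ∘ w)_k = ∑_i v_i w_i a_{ki}/deg(i)` of any `v, w ∈ ℓ²` is a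
well-defined element of `ℓ²` with `‖v ∘ w‖ ≤ ‖v‖ ‖w‖`, and every left multiplication `L_v`
is a bounded linear operator on `ℓ²`. -/
theorem random_walk_evolution_algebra_welldefined
    (a : ℕ → ℕ → ℝ)
    (hval : ∀ k i, a k i = 0 ∨ a k i = 1)
    (hsym : ∀ k i, a k i = a i k)
    (hloop : ∀ i, a i i = 0)
    (hlf : ∀ i, Summable fun k => a k i)
    (hdeg : ∀ i, 1 ≤ deg a i) :
    (∀ i, ∑' k, |a k i / deg a i| ^ 2 ≤ 1) ∧
    (∀ v w : l2,
      ∃ u : l2,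
        (∀ k, Summable fun i => v i * w i * (a k i / deg a i)) ∧
        (∀ k, u k = ∑' i, v i * w i * (a k i / deg a i)) ∧
        ‖u‖ ≤ ‖v‖ * ‖w‖) ∧
    (∀ v : l2, ∃ L : l2 →L[ℝ] l2,
      ∀ (w : l2) (k : ℕ), L w k = ∑' i, v i * w i * (a k i / deg a i)) := by
  refine ⟨tsum_sq_col_le_one a hval hlf hdeg, exists_product a hval hlf hdeg, fun v => ?_⟩
  choose u hs hu hn using exists_product a hval hlf hdeg v
  refine ⟨LinearMap.mkContinuous
    { toFun := u
      map_add' := fun w₁ w₂ => ?_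
      map_smul' := fun r w => ?_ } ‖v‖ hn, fun w k => hu w k⟩
  · ext k
    rw [lp.coeFn_add, Pi.add_apply, hu, hu, hu, ← (hs w₁ k).tsum_add (hs w₂ k)]
    refine tsum_congr fun i => ?_
    rw [lp.coeFn_add, Pi.add_apply]
    ring
  · ext k
    rw [RingHom.id_apply, lp.coeFn_smul, Pi.smul_apply, hu, hu, smul_eq_mul, ← tsum_mul_left]
    refine tsum_congr fun i => ?_
    rw [lp.coeFn_smul, Pi.smul_apply, smul_eq_mul]
    ring
end
end

section
/- Let G be a connected graph on ℕ with uniformly bounded degree. If G is regular or biregular, then there exists an isomorphism of Hilbert evolution algebras from A_RW(G) to A(G): a continuous linear bijection f : ℓ²(ℕ) → ℓ²(ℕ) with continuous inverse such that f(v ∘ w) = f(v) ⋆ f(w) for all v, w ∈ ℓ²(ℕ). -/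
/-!
The isomorphism is diagonal: `(f v)_i = c_i v_i` for positive weights `c` taking at most two
values. Comparing the coefficients of `v_i w_i` in coordinate `k`, such an `f` is multiplicative as
soon as `c_k / deg(i) = c_i ^ 2` for every edge `k ~ i`. On a `d`-regular graph `c = 1 / d` works. On
a `(d₁, d₂)`-biregular graph the two equations `c₂ / d₁ = c₁ ^ 2` and `c₁ / d₂ = c₂ ^ 2` are solved by
`c₁ = (d₁ ^ 2 d₂) ^ (-1/3)` and `c₂ = (d₁ d₂ ^ 2) ^ (-1/3)` (`exists_weights`). Connectedness of a
graph with more than one vertex makes all degrees positive (`deg_pos`).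

The products exist because `v_i w_i` is an `ℓ¹` sequence, and a nonnegative matrix with uniformly
bounded column sums maps `ℓ¹` into `ℓ¹ ⊆ ℓ²` (`exists_image`).
-/

noncomputable section
open scoped ENNReal

/-- `a` is the adjacency function of a simple graph (0/1-valued, symmetric, no loops). -/
def SimpleAdj (a : ℕ → ℕ → ℝ) : Prop :=
  (∀ k i, a k i = 0 ∨ a k i = 1) ∧ (∀ k i, a k i = a i k) ∧ (∀ i, a i i = 0)

/-- The graph is connected: any two vertices are joined by a finite path of edges. -/
def Connected (a : ℕ → ℕ → ℝ) : Prop :=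
  ∀ i j : ℕ, Relation.ReflTransGen (fun x y => a x y = 1) i j

/-- The graph is locally finite: every degree series converges. -/
def GraphLocallyFinite (a : ℕ → ℕ → ℝ) : Prop := ∀ i, Summable fun k => a k i

/-- The graph has uniformly bounded degree. -/
def UnifBoundedDegree (a : ℕ → ℕ → ℝ) : Prop := ∃ M > 0, ∀ i, deg a i ≤ M

/-- The graph is regular: all degrees are equal. -/
def GraphRegular (a : ℕ → ℕ → ℝ) : Prop := ∃ d : ℝ, ∀ i, deg a i = d

/-- The graph is biregular: the vertex set splits as `V₁ ⊔ V₂` with every edge joining `V₁`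
to `V₂` and constant degrees `d₁` on `V₁` and `d₂` on `V₂`. -/
def GraphBiregular (a : ℕ → ℕ → ℝ) : Prop :=
  ∃ (V₁ : Set ℕ) (d₁ d₂ : ℝ),
    (∀ i ∈ V₁, deg a i = d₁) ∧ (∀ i ∉ V₁, deg a i = d₂) ∧
    ∀ i k, a k i = 1 → ((i ∈ V₁ ∧ k ∉ V₁) ∨ (i ∉ V₁ ∧ k ∈ V₁))

/-- `p` is the product `v ⋆ w` in the Hilbert evolution algebra `A(G)`:
`p_k = ∑_i v_i w_i a_{ki}` with all series convergent. -/
def IsStarProd (a : ℕ → ℕ → ℝ) (v w p : l2) : Prop :=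
  (∀ k, Summable fun i => v i * w i * a k i) ∧
  ∀ k, p k = ∑' i, v i * w i * a k i

/-- `p` is the product `v ∘ w` in the Hilbert evolution algebra `A_RW(G)`:
`p_k = ∑_i v_i w_i a_{ki}/deg(i)` with all series convergent. -/
def IsRWProd (a : ℕ → ℕ → ℝ) (v w p : l2) : Prop :=
  (∀ k, Summable fun i => v i * w i * (a k i / deg a i)) ∧
  ∀ k, p k = ∑' i, v i * w i * (a k i / deg a i)

/-- The graph is non-singular: the adjacency operator `(A v)_k = ∑_i a_{ki} v_i` on ℓ²(ℕ)
has trivial kernel. -/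
def NonSingular (a : ℕ → ℕ → ℝ) : Prop :=
  ∀ v : l2, (∀ k, ∑' i, a k i * v i = 0) → v = 0

/-- The standard orthonormal basis vector `δ_i` of ℓ²(ℕ). -/
def delta (i : ℕ) : l2 := lp.single 2 i (1 : ℝ)

/-- A nonnegative matrix `m` with column sums bounded by `M` maps an `ℓ¹` sequence `u` into `ℓ²`,
by Tonelli and `ℓ¹ ⊆ ℓ²`. -/
theorem exists_image (m : ℕ → ℕ → ℝ) (M : ℝ) (hm : ∀ k i, 0 ≤ m k i)
    (hs : ∀ i, Summable fun k => m k i) (hM : ∀ i, ∑' k, m k i ≤ M) (u : ℕ → ℝ)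
    (hu : Summable fun i => |u i|) :
    ∃ p : l2, (∀ k, Summable fun i => u i * m k i) ∧ ∀ k, p k = ∑' i, u i * m k i := by
  have hnn₁ : 0 ≤ fun x : ℕ × ℕ => |u x.1| * m x.2 x.1 :=
    fun x => mul_nonneg (abs_nonneg _) (hm _ _)
  have hnn₂ : 0 ≤ fun x : ℕ × ℕ => |u x.2| * m x.1 x.2 :=
    fun x => mul_nonneg (abs_nonneg _) (hm _ _)
  have h1 : Summable fun x : ℕ × ℕ => |u x.1| * m x.2 x.1 := by
    refine (summable_prod_of_nonneg hnn₁).2 ⟨fun i => (hs i).mul_left |u i|, ?_⟩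
    simp only [tsum_mul_left]
    exact (hu.mul_right M).of_nonneg_of_le
      (fun i => mul_nonneg (abs_nonneg _) (tsum_nonneg fun k => hm k i))
      (fun i => mul_le_mul_of_nonneg_left (hM i) (abs_nonneg _))
  have h2 : Summable fun x : ℕ × ℕ => |u x.2| * m x.1 x.2 := h1.prod_symm
  have h3 := (summable_prod_of_nonneg hnn₂).1 h2
  have habs : ∀ k i, |u i * m k i| = |u i| * m k i := fun k i => by
    rw [abs_mul, abs_of_nonneg (hm k i)]
  have h4 : ∀ k, Summable fun i => |u i * m k i| := fun k => by
    simpa only [habs] using h3.1 k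
  have hmem : Memℓp (fun k => ∑' i, u i * m k i) 1 := by
    apply memℓp_gen
    simp only [ENNReal.toReal_one, Real.rpow_one]
    refine h3.2.of_nonneg_of_le (fun _ => norm_nonneg _) fun k => ?_
    have := norm_tsum_le_tsum_norm (f := fun i => u i * m k i) (h4 k)
    simpa only [Real.norm_eq_abs, habs] using this
  exact ⟨⟨_, hmem.of_exponent_ge (by norm_num)⟩, fun k => (h4 k).of_abs, fun k => rfl⟩

theorem exists_prod (m : ℕ → ℕ → ℝ) (M : ℝ) (hm : ∀ k i, 0 ≤ m k i)
    (hs : ∀ i, Summable fun k => m k i) (hM : ∀ i, ∑' k, m k i ≤ M) (v w : l2) :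
    ∃ p : l2, (∀ k, Summable fun i => v i * w i * m k i) ∧
      ∀ k, p k = ∑' i, v i * w i * m k i := by
  refine exists_image m M hm hs hM (fun i => v i * w i) ?_
  have := lp.summable_mul (p := 2) (q := 2)
    (by rw [Real.holderConjugate_iff]; norm_num) v w
  simpa [abs_mul] using this

theorem deg_pos {a : ℕ → ℕ → ℝ} (hadj : SimpleAdj a) (hconn : Connected a)
    (hlf : GraphLocallyFinite a) (i : ℕ) : 0 < deg a i := by
  rcases Relation.ReflTransGen.cases_head (hconn i (i + 1)) with h | ⟨k, hk, -⟩
  · omega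
  · refine (hlf i).tsum_pos (fun j => ?_) k ?_
    · rcases hadj.1 j i with h | h <;> simp [h]
    · rw [hadj.2.1, hk]; norm_num

/-- The diagonal isomorphism of `ℓ²` with weights bounded above and away from zero. -/
theorem exists_diagonal (c : ℕ → ℝ) (K : ℝ) (hc : ∀ i, 0 < c i) (hK : ∀ i, c i ≤ K)
    (hK' : ∀ i, (c i)⁻¹ ≤ K) : ∃ f : l2 ≃L[ℝ] l2, ∀ v i, f v i = c i * v i := by
  have hK0 : 0 ≤ K := (hc 0).le.trans (hK 0)
  let T : (ℕ → ℝ) → ℕ → ℝ →L[ℝ] ℝ := fun b i => b i • ContinuousLinearMap.id ℝ ℝ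
  have hT : ∀ b : ℕ → ℝ, (∀ i, 0 < b i) → (∀ i, b i ≤ K) → ∀ i, ‖T b i‖ ≤ K := fun b h0 h i => by
    simpa [T, norm_smul, abs_of_pos (h0 i)] using h i
  refine ⟨ContinuousLinearEquiv.equivOfInverse
    (lp.mapCLM 2 (T c) hK0 (hT c hc hK))
    (lp.mapCLM 2 (T fun i => (c i)⁻¹) hK0 (hT _ (fun i => inv_pos.2 (hc i)) hK')) ?_ ?_, ?_⟩
  · intro v
    ext i
    simp [T, (hc i).ne']
  · intro v
    ext i
    simp [T, (hc i).ne']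
  · intro v i
    simp [T]

/-- Positive solutions of the two multiplicativity equations of a biregular graph. -/
theorem exists_weights {d₁ d₂ : ℝ} (h₁ : 0 < d₁) (h₂ : 0 < d₂) :
    ∃ c₁ c₂ : ℝ, 0 < c₁ ∧ 0 < c₂ ∧ c₂ / d₁ = c₁ ^ 2 ∧ c₁ / d₂ = c₂ ^ 2 := by
  -- With cube roots `x ^ 3 = d₁` and `y ^ 3 = d₂` the weights are rational.
  obtain ⟨x, hx, rfl⟩ : ∃ x : ℝ, 0 < x ∧ x ^ 3 = d₁ :=
    ⟨d₁ ^ ((3 : ℕ) : ℝ)⁻¹, by positivity, Real.rpow_inv_natCast_pow h₁.le (by norm_num)⟩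
  obtain ⟨y, hy, rfl⟩ : ∃ y : ℝ, 0 < y ∧ y ^ 3 = d₂ :=
    ⟨d₂ ^ ((3 : ℕ) : ℝ)⁻¹, by positivity, Real.rpow_inv_natCast_pow h₂.le (by norm_num)⟩
  refine ⟨1 / (x ^ 2 * y), 1 / (x * y ^ 2), by positivity, by positivity, ?_, ?_⟩ <;> field_simp

/-- Two-valued weights satisfying the multiplicativity equation along every edge. -/
theorem exists_weight_function {a : ℕ → ℕ → ℝ} (hpos : ∀ i, 0 < deg a i)
    (hconn : Connected a) (hreg : GraphRegular a ∨ GraphBiregular a) :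
    ∃ (c : ℕ → ℝ) (c₁ c₂ : ℝ), (∀ i, 0 < c i) ∧ (∀ i, c i = c₁ ∨ c i = c₂) ∧
      ∀ k i, a k i = 1 → c k / deg a i = c i ^ 2 := by
  rcases hreg with ⟨d, hd⟩ | ⟨V, d₁, d₂, hd₁, hd₂, hV⟩
  · have h0 : 0 < d := hd 0 ▸ hpos 0
    refine ⟨fun _ => 1 / d, 1 / d, 1 / d, fun _ => by positivity, fun _ => .inl rfl,
      fun k i _ => ?_⟩
    rw [hd]
    field_simp
  · -- An edge at vertex `0` shows that both sides of the bipartition are inhabited.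
    obtain ⟨h₁, h₂⟩ : 0 < d₁ ∧ 0 < d₂ := by
      rcases Relation.ReflTransGen.cases_head (hconn 0 1) with h | ⟨k, hk, -⟩
      · omega
      · rcases hV k 0 hk with ⟨hi, hj⟩ | ⟨hi, hj⟩
        · exact ⟨hd₁ _ hi ▸ hpos _, hd₂ _ hj ▸ hpos _⟩
        · exact ⟨hd₁ _ hj ▸ hpos _, hd₂ _ hi ▸ hpos _⟩
    obtain ⟨c₁, c₂, hc₁, hc₂, e₁, e₂⟩ := exists_weights h₁ h₂
    classical
    refine ⟨fun i => if i ∈ V then c₁ else c₂, c₁, c₂, fun i => ?_, fun i => ?_,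
      fun k i hki => ?_⟩
    · dsimp only
      split_ifs <;> assumption
    · dsimp only
      split_ifs <;> simp
    · rcases hV i k hki with ⟨hi, hk⟩ | ⟨hi, hk⟩
      · simpa [hi, hk, hd₁ i hi] using e₁
      · simpa [hi, hk, hd₂ i hi] using e₂

/-- for a connected graph with uniformly bounded degree which is regular or
biregular, there exists an isomorphism of Hilbert evolution algebras from `A_RW(G)` to
`A(G)`: a continuous linear bijection `f` with continuous inverse such that
`f(v ∘ w) = f(v) ⋆ f(w)` for all `v, w ∈ ℓ²(ℕ)` (in particular all the products are
well defined). -/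
theorem exists_iso_of_regular_or_biregular
    (a : ℕ → ℕ → ℝ)
    (hadj : SimpleAdj a) (hconn : Connected a)
    (hlf : GraphLocallyFinite a) (hubd : UnifBoundedDegree a)
    (hreg : GraphRegular a ∨ GraphBiregular a) :
    ∃ f : l2 ≃L[ℝ] l2,
      (∀ v w : l2, ∃ p : l2, IsRWProd a v w p) ∧
      (∀ v w : l2, ∃ q : l2, IsStarProd a v w q) ∧
      (∀ v w p q : l2, IsRWProd a v w p → IsStarProd a (f v) (f w) q → f p = q) := by
  have hpos := deg_pos hadj hconn hlf
  have hnn : ∀ k i, 0 ≤ a k i := fun k i => by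
    rcases hadj.1 k i with h | h <;> simp [h]
  obtain ⟨c, c₁, c₂, hc, hcc, hedge⟩ := exists_weight_function hpos hconn hreg
  obtain ⟨f, hf⟩ := exists_diagonal c (max (max c₁ c₂) (max c₁⁻¹ c₂⁻¹)) hc
    (fun i => by rcases hcc i with h | h <;> simp [h])
    (fun i => by rcases hcc i with h | h <;> simp [h])
  refine ⟨f, fun v w => ?_, fun v w => ?_, ?_⟩
  · refine exists_prod (fun k i => a k i / deg a i) 1
      (fun k i => div_nonneg (hnn k i) (hpos i).le) (fun i => (hlf i).div_const _)
      (fun i => ?_) v w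
    rw [tsum_div_const]
    exact (div_self (hpos i).ne').le
  · obtain ⟨M, -, hM⟩ := hubd
    exact exists_prod a M hnn hlf hM v w
  · rintro v w p q ⟨-, hp⟩ ⟨-, hq⟩
    ext k
    rw [hf, hp, hq, ← tsum_mul_left]
    refine tsum_congr fun i => ?_
    rw [hf, hf]
    rcases hadj.1 k i with h | h
    · simp [h]
    · have := hedge k i h
      rw [h]
      linear_combination v i * w i * this
end
end

section
/- Let G be a connected graph on ℕ with uniformly bounded degree which is non-singular, i.e. the bounded adjacency operator A on ℓ²(ℕ), (A v)_k = ∑_i a_{ki} v_i, has trivial kernel. If there exists an isomorphism of Hilbert evolution algebras from A_RW(G) to A(G) (a continuous linear bijection f with continuous inverse satisfying f(v ∘ w) = f(v) ⋆ f(w) for all v, w), then G is a regular graph or a biregular graph. -/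
/-!
The isomorphism `f` maps distinct basis vectors, whose product vanishes, to vectors whose
`⋆`-product vanishes; by non-singularity these images have disjoint supports
(`image_mul_eq_zero`). Since `f` is surjective, each support is a single vertex
(`exists_monomial`), so `f δ_i = c_i δ_{π i}` with `c_i ≠ 0`. Comparing the coordinate `π k` in
`f (δ_i ∘ δ_i) = f δ_i ⋆ f δ_i` for an edge `k ~ i` gives `c_k = deg(i) c_i²`
(`coeff_of_adj`), and by symmetry `c_i = deg(k) c_k²`, hence `deg(k) deg(i)² c_i³ = 1`. So all
neighbours of a vertex have the same degree (`deg_eq_of_adj`), and a connected graph with this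
property has its degrees alternating between two (possibly equal) values along edges.
-/

noncomputable section
open scoped ENNReal

/-- The column `k ↦ a k i` of the adjacency matrix, as an element of ℓ²(ℕ). -/
def column (a : ℕ → ℕ → ℝ) (hadj : SimpleAdj a) (hlf : GraphLocallyFinite a) (i : ℕ) : l2 :=
  ⟨fun k => a k i, memℓp_gen (by
    refine (hlf i).congr fun k => ?_
    rcases hadj.1 k i with h | h <;> simp [h])⟩

lemma norm_column_sq (a : ℕ → ℕ → ℝ) (hadj : SimpleAdj a) (hlf : GraphLocallyFinite a) (i : ℕ) :
    ‖column a hadj hlf i‖ ^ 2 = deg a i := by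
  have h := lp.norm_rpow_eq_tsum (p := 2) (by simp) (column a hadj hlf i)
  simp only [ENNReal.toReal_ofNat, Real.rpow_two] at h
  rw [h, deg]
  refine tsum_congr fun k => ?_
  change ‖a k i‖ ^ 2 = a k i
  rcases hadj.1 k i with h | h <;> simp [h]

lemma summable_abs_mul (v w : l2) : Summable fun i => |v i * w i| := by
  have h := lp.summable_inner (𝕜 := ℝ) v w
  simpa [mul_comm] using h.abs

/-- The pointwise product of two square-summable sequences is square-summable. -/
def pointwiseMul (v w : l2) : l2 :=
  ⟨fun i => v i * w i, Memℓp.of_exponent_ge (q := 1)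
    (memℓp_gen (by simpa using summable_abs_mul v w)) (by norm_num)⟩

/-- The product `v ⋆ w` always exists: it is the norm-convergent series `∑ v_i w_i A_i`, where the
columns `A_i` have uniformly bounded norm. -/
lemma exists_isStarProd (a : ℕ → ℕ → ℝ) (hadj : SimpleAdj a) (hlf : GraphLocallyFinite a)
    (hubd : UnifBoundedDegree a) (v w : l2) : ∃ q, IsStarProd a v w q := by
  obtain ⟨M, hM, hdeg⟩ := hubd
  have hs : Summable fun i => (v i * w i) • column a hadj hlf i := by
    refine Summable.of_norm_bounded (g := fun i => |v i * w i| * √M)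
      ((summable_abs_mul v w).mul_right _) fun i => ?_
    rw [norm_smul, Real.norm_eq_abs]
    gcongr
    apply Real.le_sqrt_of_sq_le
    rw [norm_column_sq]
    exact hdeg i
  have hk : ∀ k, HasSum (fun i => v i * w i * a k i)
      ((∑' i, (v i * w i) • column a hadj hlf i : l2) k) := fun k =>
    hs.hasSum.mapL (lp.evalCLM ℝ (fun _ : ℕ => ℝ) 2 k)
  exact ⟨_, fun k => (hk k).summable, fun k => (hk k).tsum_eq.symm⟩

lemma delta_apply (i k : ℕ) : (delta i : l2) k = if k = i then 1 else 0 := by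
  simp [delta, Pi.single_apply]

lemma delta_mul_delta_of_ne {i j : ℕ} (hij : i ≠ j) (k : ℕ) :
    (delta i : l2) k * (delta j : l2) k = 0 := by
  simp only [delta_apply]
  split_ifs with h1 h2 <;> simp_all

lemma isRWProd_delta_of_ne (a : ℕ → ℕ → ℝ) {i j : ℕ} (hij : i ≠ j) :
    IsRWProd a (delta i) (delta j) 0 := by
  constructor <;> intro k <;> simp [delta_mul_delta_of_ne hij, summable_zero]

lemma isRWProd_delta_self (a : ℕ → ℕ → ℝ) (hadj : SimpleAdj a) (hlf : GraphLocallyFinite a)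
    (i : ℕ) : IsRWProd a (delta i) (delta i) ((deg a i)⁻¹ • column a hadj hlf i) := by
  have h : ∀ k, HasSum (fun j => (delta i : l2) j * (delta i : l2) j * (a k j / deg a j))
      (((deg a i)⁻¹ • column a hadj hlf i : l2) k) := by
    intro k
    convert hasSum_single i ?_ using 1
    · change (deg a i)⁻¹ * a k i = _
      simp [delta_apply, div_eq_inv_mul]
    · intro j hj
      simp [delta_apply, hj]
  exact ⟨fun k => (h k).summable, fun k => (h k).tsum_eq.symm⟩

/-- The images of distinct basis vectors have disjoint supports. -/
lemma image_mul_eq_zero (a : ℕ → ℕ → ℝ) (hadj : SimpleAdj a) (hlf : GraphLocallyFinite a)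
    (hubd : UnifBoundedDegree a) (hns : NonSingular a) (f : l2 ≃L[ℝ] l2)
    (hf : ∀ v w p q : l2, IsRWProd a v w p → IsStarProd a (f v) (f w) q → f p = q)
    {i j : ℕ} (hij : i ≠ j) (k : ℕ) : f (delta i) k * f (delta j) k = 0 := by
  obtain ⟨q, hq⟩ := exists_isStarProd a hadj hlf hubd (f (delta i)) (f (delta j))
  have h0 := hf _ _ _ _ (isRWProd_delta_of_ne a hij) hq
  rw [map_zero] at h0
  have hu : pointwiseMul (f (delta i)) (f (delta j)) = 0 := by
    refine hns _ fun k => ?_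
    have hk := hq.2 k
    rw [← h0] at hk
    refine Eq.trans (tsum_congr fun m => ?_) hk.symm
    exact mul_comm _ _
  exact congrArg (fun u : l2 => u k) hu

/-- If `m` lies in the support of `f δ_i` and supports are disjoint, then the `m`-th coordinate of
`f v` only sees the `i`-th coordinate of `v`. -/
lemma apply_eq_of_disjoint (f : l2 ≃L[ℝ] l2)
    (hdisj : ∀ i j, i ≠ j → ∀ k, f (delta i) k * f (delta j) k = 0)
    {i m : ℕ} (hm : f (delta i) m ≠ 0) (v : l2) : f v m = v i * f (delta i) m := by
  have hv : HasSum (fun j => (lp.single 2 j (v j) : l2)) v := lp.hasSum_single (by simp) v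
  have hs := (hv.mapL (f : l2 →L[ℝ] l2)).mapL (lp.evalCLM ℝ (fun _ : ℕ => ℝ) 2 m)
  have hterm : ∀ j, f (lp.single 2 j (v j) : l2) m = v j * f (delta j) m := by
    intro j
    have : (lp.single 2 j (v j) : l2) = v j • delta j := by
      rw [delta, ← lp.single_smul]; simp
    rw [this, map_smul]
    rfl
  have hs' : HasSum (fun j => v j * f (delta j) m) (f v m) := by
    simp_rw [← hterm]
    exact hs
  refine hs'.unique (hasSum_single i fun j hj => ?_)
  rw [(mul_eq_zero.mp (hdisj i j hj.symm m)).resolve_left hm, mul_zero]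

lemma exists_monomial (f : l2 ≃L[ℝ] l2)
    (hdisj : ∀ i j, i ≠ j → ∀ k, f (delta i) k * f (delta j) k = 0) (i : ℕ) :
    ∃ m, f (delta i) m ≠ 0 ∧ ∀ m', m' ≠ m → f (delta i) m' = 0 := by
  have hne : ∃ m, f (delta i) m ≠ 0 := by
    by_contra! h
    have h0 : f (delta i) = 0 := by ext m; exact h m
    have h1 : delta i = 0 := by simpa using h0
    have := congrArg (fun u : l2 => u i) h1
    simp [delta_apply] at this
  obtain ⟨m, hm⟩ := hne
  refine ⟨m, hm, fun m' hm' => ?_⟩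
  by_contra h
  -- With two points `m ≠ m'` in the support, `δ_m` could not be in the range of `f`.
  have e1 := apply_eq_of_disjoint f hdisj hm (f.symm (delta m))
  have e2 := apply_eq_of_disjoint f hdisj h (f.symm (delta m))
  simp only [ContinuousLinearEquiv.apply_symm_apply, delta_apply, if_neg hm', if_true] at e1 e2
  rcases mul_eq_zero.mp e2.symm with h' | h'
  · simp [h'] at e1
  · exact h h'

lemma deg_pos_of_adj (a : ℕ → ℕ → ℝ) (hadj : SimpleAdj a) (hlf : GraphLocallyFinite a)
    {i k : ℕ} (h : a k i = 1) : 0 < deg a i := by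
  have := (hlf i).le_tsum k fun j _ => by rcases hadj.1 j i with h | h <;> simp [h]
  rw [h] at this
  exact lt_of_lt_of_le one_pos this

/-- Along an edge the coefficients of `f δ_i = c_i δ_{π i}` satisfy `c_k = deg(i) c_i²`. -/
lemma coeff_of_adj (a : ℕ → ℕ → ℝ) (hadj : SimpleAdj a) (hlf : GraphLocallyFinite a)
    (hubd : UnifBoundedDegree a) (f : l2 ≃L[ℝ] l2)
    (hf : ∀ v w p q : l2, IsRWProd a v w p → IsStarProd a (f v) (f w) q → f p = q)
    (hdisj : ∀ i j, i ≠ j → ∀ k, f (delta i) k * f (delta j) k = 0)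
    (π : ℕ → ℕ) (hπ : ∀ i, f (delta i) (π i) ≠ 0)
    (hπ' : ∀ i m, m ≠ π i → f (delta i) m = 0) {i k : ℕ} (h : a k i = 1) :
    f (delta k) (π k) = deg a i * f (delta i) (π i) ^ 2 := by
  obtain ⟨q, hq⟩ := exists_isStarProd a hadj hlf hubd (f (delta i)) (f (delta i))
  have hfp := hf _ _ _ _ (isRWProd_delta_self a hadj hlf i) hq
  have hd := deg_pos_of_adj a hadj hlf h
  have hleft := apply_eq_of_disjoint f hdisj (hπ k) ((deg a i)⁻¹ • column a hadj hlf i)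
  have hcol : ((deg a i)⁻¹ • column a hadj hlf i : l2) k = (deg a i)⁻¹ := by
    change (deg a i)⁻¹ * a k i = _
    rw [h, mul_one]
  rw [hfp, hq.2, tsum_eq_single (π i) (fun m hm => by simp [hπ' i m hm]), hcol] at hleft
  -- The right side is nonzero, so `π k` and `π i` are adjacent.
  rcases hadj.1 (π k) (π i) with h0 | h1
  · rw [h0, mul_zero] at hleft
    exact absurd hleft.symm (mul_ne_zero (inv_ne_zero hd.ne') (hπ k))
  · rw [h1, mul_one] at hleft
    rw [sq, hleft, mul_inv_cancel_left₀ hd.ne']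

/-- Neighbours of a common vertex have equal degrees, given coefficients as in `coeff_of_adj`. -/
lemma deg_eq_of_adj (a : ℕ → ℕ → ℝ) (hadj : SimpleAdj a) (c : ℕ → ℝ) (hc : ∀ i, c i ≠ 0)
    (hrel : ∀ i k, a k i = 1 → c k = deg a i * c i ^ 2) {i k l : ℕ}
    (hk : a k i = 1) (hl : a l i = 1) : deg a k = deg a l := by
  have key : ∀ m, a m i = 1 → deg a m * c m ^ 2 = c i := fun m hm =>
    (hrel m i (by rw [hadj.2.1]; exact hm)).symm
  have hkl : c k = c l := (hrel i k hk).trans (hrel i l hl).symm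
  have h := (key k hk).trans (key l hl).symm
  rw [hkl] at h
  exact mul_right_cancel₀ (pow_ne_zero 2 (hc l)) h

/-- A connected graph in which the neighbours of any vertex have equal degrees is regular or
biregular. -/
lemma regular_or_biregular_of_deg_eq (a : ℕ → ℕ → ℝ) (hadj : SimpleAdj a) (hconn : Connected a)
    (h : ∀ i k l, a k i = 1 → a l i = 1 → deg a k = deg a l) :
    GraphRegular a ∨ GraphBiregular a := by
  obtain ⟨n, hn⟩ : ∃ n, a 0 n = 1 := by
    rcases Relation.ReflTransGen.cases_head (hconn 0 1) with h | ⟨n, hn, -⟩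
    · exact absurd h zero_ne_one
    · exact ⟨n, hn⟩
  have hn' : a n 0 = 1 := by rw [hadj.2.1]; exact hn
  have key : ∀ j, (deg a j = deg a 0 ∧ ∀ k, a k j = 1 → deg a k = deg a n) ∨
      (deg a j = deg a n ∧ ∀ k, a k j = 1 → deg a k = deg a 0) := by
    intro j
    induction hconn 0 j with
    | refl => exact Or.inl ⟨rfl, fun k hk => h 0 k n hk hn'⟩
    | @tail x y _ hxy ih =>
      have hyx : a y x = 1 := by rw [hadj.2.1]; exact hxy
      rcases ih with ⟨h1, h2⟩ | ⟨h1, h2⟩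
      · exact Or.inr ⟨h2 y hyx, fun k hk => (h y k x hk hxy).trans h1⟩
      · exact Or.inl ⟨h2 y hyx, fun k hk => (h y k x hk hxy).trans h1⟩
  by_cases hde : deg a 0 = deg a n
  · exact Or.inl ⟨deg a 0, fun i => (key i).elim (·.1) (fun hi => hi.1.trans hde.symm)⟩
  · refine Or.inr ⟨{i | deg a i = deg a 0}, deg a 0, deg a n, fun i hi => hi,
      fun i hi => (key i).elim (fun hi' => absurd hi'.1 hi) (·.1), fun i k hik => ?_⟩
    rcases key i with ⟨h1, h2⟩ | ⟨h1, h2⟩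
    · exact Or.inl ⟨h1, fun hk => hde ((Eq.symm hk).trans (h2 k hik))⟩
    · exact Or.inr ⟨fun hi => hde ((Eq.symm hi).trans h1), h2 k hik⟩

/-- for a connected non-singular graph with uniformly bounded degree, if there
exists an isomorphism of Hilbert evolution algebras from `A_RW(G)` to `A(G)` (a continuous
linear bijection `f` with continuous inverse satisfying `f(v ∘ w) = f(v) ⋆ f(w)` for all
`v, w`), then the graph is regular or biregular. -/
theorem regular_or_biregular_of_iso
    (a : ℕ → ℕ → ℝ)
    (hadj : SimpleAdj a) (hconn : Connected a)
    (hlf : GraphLocallyFinite a) (hubd : UnifBoundedDegree a)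
    (hns : NonSingular a)
    (hiso : ∃ f : l2 ≃L[ℝ] l2,
      ∀ v w p q : l2, IsRWProd a v w p → IsStarProd a (f v) (f w) q → f p = q) :
    GraphRegular a ∨ GraphBiregular a := by
  obtain ⟨f, hf⟩ := hiso
  have hdisj : ∀ i j, i ≠ j → ∀ k, f (delta i) k * f (delta j) k = 0 := fun i j hij k =>
    image_mul_eq_zero a hadj hlf hubd hns f hf hij k
  choose π hπ hπ' using exists_monomial f hdisj
  exact regular_or_biregular_of_deg_eq a hadj hconn fun i k l hk hl =>
    deg_eq_of_adj a hadj (fun i => f (delta i) (π i)) hπ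
      (fun i k h => coeff_of_adj a hadj hlf hubd f hf hdisj π hπ hπ' h) hk hl
end
end

section
/- Let G be a (d₁,d₂)-biregular graph on ℕ: ℕ = V₁ ⊔ V₂, every edge joins V₁ to V₂, deg(i) = d₁ ≥ 1 for i ∈ V₁ and deg(i) = d₂ ≥ 1 for i ∈ V₂. Then the linear map f : ℓ²(ℕ) → ℓ²(ℕ) defined by f(δ_i) = (d₁² d₂)^{1/3} δ_i for i ∈ V₁ and f(δ_i) = (d₁ d₂²)^{1/3} δ_i for i ∈ V₂ is an isomorphism of Hilbert evolution algebras from A(G) to A_RW(G): f is a continuous linear bijection with continuous inverse satisfying f(v ⋆ w) = f(v) ∘ f(w) for all v, w ∈ ℓ²(ℕ). -/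
/-!
The map is the diagonal operator with entries `c i = (d₁² d₂)^(1/3)` on `V₁` and
`c i = (d₁ d₂²)^(1/3)` off `V₁`. Both values are positive, so the operator and its inverse are
bounded (`diagMap`, `diagEquiv`). Compatibility with the products reduces, term by term, to the
identity `c k = c i ^ 2 / deg i` along every edge `k ~ i`, which holds because adjacent vertices
lie on opposite sides (`cbrt_sq_div`).

The products exist because `v i * w i` is summable for `v, w ∈ ℓ²`, and a nonnegative matrix with
uniformly bounded column sums maps `ℓ¹` to `ℓ¹ ⊆ ℓ²` (`summable_matrix_image`). For `A(G)` the column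
sums are the degrees; for `A_RW(G)` they are at most `1`.
-/

noncomputable section
open scoped ENNReal

lemma memlp_diag {c : ℕ → ℝ} {C : ℝ} (hc : ∀ i, |c i| ≤ C) (v : l2) :
    Memℓp (fun i => c i * v i) 2 := by
  refine ((lp.memℓp v).const_mul C).mono' fun i => ?_
  rw [norm_mul, norm_mul]
  gcongr
  exact (hc i).trans (le_abs_self C)

/-- The diagonal operator on `ℓ²(ℕ)` with bounded entries `c`. -/
def diagMap (c : ℕ → ℝ) (C : ℝ) (hc : ∀ i, |c i| ≤ C) : l2 →L[ℝ] l2 :=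
  LinearMap.mkContinuous
    { toFun := fun v => ⟨fun i => c i * v i, memlp_diag hc v⟩
      map_add' := fun v w => by
        ext i
        exact mul_add (c i) (v i) (w i)
      map_smul' := fun r v => by
        ext i
        exact mul_left_comm (c i) r (v i) }
    C (fun v => by
      have hC : 0 ≤ C := (abs_nonneg _).trans (hc 0)
      calc _ ≤ ‖C • v‖ := by
            refine lp.norm_mono (by norm_num) fun i => ?_
            change ‖c i * v i‖ ≤ ‖C * v i‖
            rw [norm_mul, norm_mul]
            gcongr
            exact (hc i).trans (le_abs_self C)
        _ = C * ‖v‖ := by rw [norm_smul, Real.norm_of_nonneg hC])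

lemma diagMap_apply (c : ℕ → ℝ) (C : ℝ) (hc : ∀ i, |c i| ≤ C) (v : l2) (i : ℕ) :
    diagMap c C hc v i = c i * v i := rfl

/-- The diagonal operator with nonvanishing entries `c`, invertible when both `c` and `c⁻¹` are
bounded. -/
def diagEquiv (c : ℕ → ℝ) (C D : ℝ) (hc : ∀ i, |c i| ≤ C) (hd : ∀ i, |(c i)⁻¹| ≤ D)
    (h0 : ∀ i, c i ≠ 0) : l2 ≃L[ℝ] l2 :=
  ContinuousLinearEquiv.equivOfInverse (diagMap c C hc) (diagMap (fun i => (c i)⁻¹) D hd)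
    (fun v => by
      ext i
      simp only [diagMap_apply]
      exact inv_mul_cancel_left₀ (h0 i) (v i))
    (fun v => by
      ext i
      simp only [diagMap_apply]
      exact mul_inv_cancel_left₀ (h0 i) (v i))

lemma diagEquiv_apply (c : ℕ → ℝ) (C D : ℝ) (hc : ∀ i, |c i| ≤ C) (hd : ∀ i, |(c i)⁻¹| ≤ D)
    (h0 : ∀ i, c i ≠ 0) (v : l2) (i : ℕ) : diagEquiv c C D hc hd h0 v i = c i * v i := rfl

lemma diagEquiv_delta (c : ℕ → ℝ) (C D : ℝ) (hc : ∀ i, |c i| ≤ C) (hd : ∀ i, |(c i)⁻¹| ≤ D)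
    (h0 : ∀ i, c i ≠ 0) (i : ℕ) : diagEquiv c C D hc hd h0 (delta i) = c i • delta i := by
  ext j
  rw [diagEquiv_apply, lp.coeFn_smul, Pi.smul_apply, smul_eq_mul]
  by_cases h : j = i
  · rw [h]
  · have : (delta i) j = 0 := by simp [delta, lp.single_apply, h]
    simp [this]

/-- A nonnegative matrix with bounded column sums maps `ℓ¹` to `ℓ¹`: the double series converges
absolutely, so it may be summed in either order. -/
lemma summable_matrix_image (b : ℕ → ℕ → ℝ) (M : ℝ) (hb : ∀ k i, 0 ≤ b k i)
    (hs : ∀ i, Summable fun k => b k i) (hM : ∀ i, ∑' k, b k i ≤ M)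
    (u : ℕ → ℝ) (hu : Summable u) :
    (∀ k, Summable fun i => u i * b k i) ∧ Summable fun k => ∑' i, u i * b k i := by
  have hF0 : 0 ≤ fun x : ℕ × ℕ => |u x.1| * b x.2 x.1 := fun x =>
    mul_nonneg (abs_nonneg (u x.1)) (hb x.2 x.1)
  have hF : Summable fun x : ℕ × ℕ => |u x.1| * b x.2 x.1 := by
    refine (summable_prod_of_nonneg hF0).2 ⟨fun i => (hs i).mul_left |u i|, ?_⟩
    refine Summable.of_nonneg_of_le
      (fun i => tsum_nonneg fun k => mul_nonneg (abs_nonneg (u i)) (hb k i))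
      (fun i => ?_) (hu.abs.mul_right M)
    change ∑' k, |u i| * b k i ≤ |u i| * M
    rw [tsum_mul_left]
    exact mul_le_mul_of_nonneg_left (hM i) (abs_nonneg (u i))
  have hF' : Summable fun x : ℕ × ℕ => u x.2 * b x.1 x.2 := by
    refine Summable.of_abs (hF.prod_symm.congr fun x => ?_)
    simp [abs_mul, abs_of_nonneg (hb x.1 x.2)]
  exact ⟨fun k => hF'.prod_factor k, hF'.prod⟩

/-- The common form of both evolution products: `v * w` is in `ℓ¹`, and a nonnegative matrix with
bounded column sums maps it into `ℓ¹ ⊆ ℓ²`. -/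
lemma exists_matrix_image (b : ℕ → ℕ → ℝ) (M : ℝ) (hb : ∀ k i, 0 ≤ b k i)
    (hs : ∀ i, Summable fun k => b k i) (hM : ∀ i, ∑' k, b k i ≤ M) (v w : l2) :
    ∃ p : l2, (∀ k, Summable fun i => v i * w i * b k i) ∧
      ∀ k, p k = ∑' i, v i * w i * b k i := by
  have hu : Summable fun i => v i * w i := by
    simpa [mul_comm] using lp.summable_inner (𝕜 := ℝ) v w
  obtain ⟨hrow, hsum⟩ := summable_matrix_image b M hb hs hM _ hu
  have h1 : Memℓp (fun k => ∑' i, v i * w i * b k i) 1 :=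
    memℓp_gen (by simpa using hsum.abs)
  exact ⟨⟨_, h1.of_exponent_ge (by norm_num)⟩, hrow, fun k => rfl⟩

/-- The relation between the two diagonal entries across an edge whose source has degree `x`. -/
lemma cbrt_sq_div {x y : ℝ} (hx : 0 < x) (hy : 0 < y) :
    ((x ^ 2 * y) ^ ((1 : ℝ) / 3)) ^ 2 / x = (x * y ^ 2) ^ ((1 : ℝ) / 3) := by
  have h : (x ^ 2 * y) ^ 2 = x ^ 3 * (x * y ^ 2) := by ring
  have hx3 : (x ^ 3) ^ ((1 : ℝ) / 3) = x := by
    rw [← Real.rpow_natCast, ← Real.rpow_mul hx.le]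
    norm_num
  rw [div_eq_iff hx.ne', Real.rpow_pow_comm (by positivity), h,
    Real.mul_rpow (by positivity) (by positivity), hx3, mul_comm]

/-- for a `(d₁,d₂)`-biregular graph on ℕ (with `d₁, d₂ ≥ 1`), the linear map
determined by `f(δ_i) = (d₁² d₂)^{1/3} δ_i` on `V₁` and `f(δ_i) = (d₁ d₂²)^{1/3} δ_i` on
`V₂` is an isomorphism of Hilbert evolution algebras from `A(G)` to `A_RW(G)`: a continuous
linear bijection with continuous inverse satisfying `f(v ⋆ w) = f(v) ∘ f(w)`. -/
theorem biregular_explicit_iso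
    (a : ℕ → ℕ → ℝ) (V₁ : Set ℕ) (d₁ d₂ : ℝ)
    (hadj : SimpleAdj a) (hlf : GraphLocallyFinite a)
    (hd₁ : 1 ≤ d₁) (hd₂ : 1 ≤ d₂)
    (hdeg₁ : ∀ i ∈ V₁, deg a i = d₁)
    (hdeg₂ : ∀ i ∉ V₁, deg a i = d₂)
    (hbip : ∀ i k, a k i = 1 → ((i ∈ V₁ ∧ k ∉ V₁) ∨ (i ∉ V₁ ∧ k ∈ V₁))) :
    ∃ f : l2 ≃L[ℝ] l2,
      (∀ i ∈ V₁, f (delta i) = ((d₁ ^ 2 * d₂) ^ ((1 : ℝ) / 3)) • delta i) ∧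
      (∀ i ∉ V₁, f (delta i) = ((d₁ * d₂ ^ 2) ^ ((1 : ℝ) / 3)) • delta i) ∧
      (∀ v w : l2, ∃ p : l2, IsStarProd a v w p) ∧
      (∀ v w : l2, ∃ q : l2, IsRWProd a v w q) ∧
      (∀ v w p q : l2, IsStarProd a v w p → IsRWProd a (f v) (f w) q → f p = q) := by
  classical
  obtain ⟨h01, -, -⟩ := hadj
  have hp₁ : 0 < d₁ := by linarith
  have hp₂ : 0 < d₂ := by linarith
  have hnn : ∀ k i, 0 ≤ a k i := fun k i => by
    rcases h01 k i with h | h <;> simp [h]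
  set A := (d₁ ^ 2 * d₂) ^ ((1 : ℝ) / 3) with hA
  set B := (d₁ * d₂ ^ 2) ^ ((1 : ℝ) / 3) with hB
  have hA0 : 0 < A := by positivity
  have hB0 : 0 < B := by positivity
  have hAB : A ^ 2 / d₁ = B := cbrt_sq_div hp₁ hp₂
  have hBA : B ^ 2 / d₂ = A := by
    have h := cbrt_sq_div hp₂ hp₁
    rwa [mul_comm (d₂ ^ 2), mul_comm d₂] at h
  let c : ℕ → ℝ := fun i => if i ∈ V₁ then A else B
  have c₁ : ∀ i ∈ V₁, c i = A := fun i hi => if_pos hi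
  have c₂ : ∀ i ∉ V₁, c i = B := fun i hi => if_neg hi
  have hc : ∀ i, |c i| ≤ max A B := fun i => by
    by_cases hi : i ∈ V₁
    · simp [c₁ i hi, abs_of_pos hA0]
    · simp [c₂ i hi, abs_of_pos hB0]
  have hd : ∀ i, |(c i)⁻¹| ≤ max A⁻¹ B⁻¹ := fun i => by
    by_cases hi : i ∈ V₁
    · rw [c₁ i hi, abs_of_pos (inv_pos.2 hA0)]
      exact le_max_left _ _
    · rw [c₂ i hi, abs_of_pos (inv_pos.2 hB0)]
      exact le_max_right _ _
  have h0 : ∀ i, c i ≠ 0 := fun i => by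
    by_cases hi : i ∈ V₁
    · rw [c₁ i hi]
      exact hA0.ne'
    · rw [c₂ i hi]
      exact hB0.ne'
  have hedge : ∀ k i, c i ^ 2 * (a k i / deg a i) = c k * a k i := fun k i => by
    rcases h01 k i with h | h
    · simp [h]
    · rw [h, mul_one, mul_one_div]
      rcases hbip i k h with ⟨hi, hk⟩ | ⟨hi, hk⟩
      · rw [c₁ i hi, c₂ k hk, hdeg₁ i hi, hAB]
      · rw [c₂ i hi, c₁ k hk, hdeg₂ i hi, hBA]
  refine ⟨diagEquiv c _ _ hc hd h0, fun i hi => ?_, fun i hi => ?_, fun v w => ?_,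
    fun v w => ?_, fun v w p q hp hq => ?_⟩
  · rw [diagEquiv_delta, c₁ i hi]
  · rw [diagEquiv_delta, c₂ i hi]
  · refine exists_matrix_image a (max d₁ d₂) hnn hlf (fun i => ?_) v w
    change deg a i ≤ _
    by_cases hi : i ∈ V₁
    · simp [hdeg₁ i hi]
    · simp [hdeg₂ i hi]
  · refine exists_matrix_image (fun k i => a k i / deg a i) 1
      (fun k i => div_nonneg (hnn k i) (tsum_nonneg fun k => hnn k i))
      (fun i => (hlf i).div_const _) (fun i => ?_) v w
    rw [tsum_div_const]
    exact div_self_le_one (deg a i)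
  · ext k
    rw [hq.2 k, diagEquiv_apply, hp.2 k, ← tsum_mul_left]
    refine tsum_congr fun i => ?_
    rw [diagEquiv_apply, diagEquiv_apply]
    linear_combination -(v i * w i) * hedge k i
end
end

section
/- Let G be a d-regular graph on ℕ with d ≥ 1, i.e. deg(i) = d for all i. Then the linear map f : ℓ²(ℕ) → ℓ²(ℕ) defined by f(v) = d·v is an isomorphism of Hilbert evolution algebras from A(G) to A_RW(G): f is a continuous linear bijection with continuous inverse satisfying f(v ⋆ w) = f(v) ∘ f(w) for all v, w ∈ ℓ²(ℕ). -/
/-!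
For `v, w ∈ ℓ²` the sequence `(v_i w_i)` is in `ℓ¹`, and the adjacency operator of a regular graph
maps `ℓ¹` into `ℓ¹ ⊆ ℓ²` (`exists_adjacency_image`), so both products always exist. Since every
degree equals `d`, the product `∘` is `⋆` divided by `d`, whence
`(d v) ∘ (d w) = d² (v ⋆ w) / d = d (v ⋆ w)`.
-/

noncomputable section
open scoped ENNReal

/-- The adjacency operator of a `d`-regular graph sends `ℓ¹` into `ℓ²`: the double series
`∑_{i,k} |u_i| a_{ki} = d ∑_i |u_i|` converges, so the image lies in `ℓ¹ ⊆ ℓ²`. -/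
lemma exists_adjacency_image
    (a : ℕ → ℕ → ℝ) (d : ℝ) (hadj : SimpleAdj a) (hlf : GraphLocallyFinite a)
    (hreg : ∀ i, deg a i = d) (u : ℕ → ℝ) (hu : Summable u) :
    ∃ p : l2, (∀ k, Summable fun i => u i * a k i) ∧ ∀ k, p k = ∑' i, u i * a k i := by
  have ha : ∀ k i, 0 ≤ a k i := fun k i => by rcases hadj.1 k i with h | h <;> simp [h]
  have hnorm : ∀ k i, ‖u i * a k i‖ = |u i| * a k i := fun k i => by
    rw [norm_mul, Real.norm_eq_abs, Real.norm_of_nonneg (ha k i)]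
  have hdouble : Summable fun x : ℕ × ℕ => ‖u x.1 * a x.2 x.1‖ := by
    rw [summable_prod_of_nonneg (fun _ => norm_nonneg _)]
    simp only [hnorm]
    refine ⟨fun i => (hlf i).mul_left _, ?_⟩
    have h : ∀ i, ∑' k, |u i| * a k i = |u i| * d := fun i => by
      rw [tsum_mul_left, ← hreg i, deg]
    simp only [h]
    exact hu.abs.mul_right d
  have hswap : Summable fun x : ℕ × ℕ => u x.2 * a x.1 x.2 := hdouble.of_norm.prod_symm
  have hp : Memℓp (fun k => ∑' i, u i * a k i) 2 := by
    refine Memℓp.of_exponent_ge (q := 1) ?_ (by norm_num)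
    refine memℓp_gen ?_
    simpa using hswap.prod.abs
  exact ⟨⟨_, hp⟩, fun k => hswap.prod_factor k, fun k => rfl⟩

lemma summable_coord_mul (v w : l2) : Summable fun i => v i * w i := by
  have h := lp.summable_inner (𝕜 := ℝ) w v
  simpa using h

/-- for a `d`-regular graph on ℕ with `d ≥ 1`, the map `f(v) = d·v` is an
isomorphism of Hilbert evolution algebras from `A(G)` to `A_RW(G)`: a continuous linear
bijection with continuous inverse satisfying `f(v ⋆ w) = f(v) ∘ f(w)`. -/
theorem regular_explicit_iso
    (a : ℕ → ℕ → ℝ) (d : ℝ)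
    (hadj : SimpleAdj a) (hlf : GraphLocallyFinite a)
    (hd : 1 ≤ d) (hreg : ∀ i, deg a i = d) :
    ∃ f : l2 ≃L[ℝ] l2,
      (∀ v : l2, f v = d • v) ∧
      (∀ v w : l2, ∃ p : l2, IsStarProd a v w p) ∧
      (∀ v w : l2, ∃ q : l2, IsRWProd a v w q) ∧
      (∀ v w p q : l2, IsStarProd a v w p → IsRWProd a (f v) (f w) q → f p = q) := by
  have hd0 : d ≠ 0 := by positivity
  refine ⟨ContinuousLinearEquiv.smulLeft (Units.mk0 d hd0), fun v => rfl, ?_, ?_, ?_⟩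
  · intro v w
    exact exists_adjacency_image a d hadj hlf hreg _ (summable_coord_mul v w)
  · intro v w
    -- As every degree is `d`, the factor `1 / deg i` can be moved onto the coefficients `v_i w_i`.
    obtain ⟨q, hs, hq⟩ := exists_adjacency_image a d hadj hlf hreg _
      ((summable_coord_mul v w).div_const d)
    have h : ∀ k i, v i * w i * (a k i / deg a i) = v i * w i / d * a k i := fun k i => by
      rw [hreg]; ring
    refine ⟨q, ?_, ?_⟩ <;> simpa only [h]
  · rintro v w p q ⟨-, hp⟩ ⟨-, hq⟩
    ext k
    rw [hq k]
    change d * p k = ∑' i, d * v i * (d * w i) * (a k i / deg a i)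
    rw [hp k, ← tsum_mul_left]
    refine tsum_congr fun i => ?_
    rw [hreg]
    field_simp
end
end

section
/- Let G be a locally finite graph on ℕ with deg(i) ≥ 1 for all i. For sequences v, w : ℕ → ℝ with ∑_i v_i² deg(i) < ∞ and ∑_i w_i² deg(i) < ∞, define u_k = ∑_i v_i w_i a_{ki}/deg(k)^{1/2}. Then each series defining u_k converges, and ∑_k u_k² deg(k) ≤ (∑_i v_i²) · (∑_i w_i² deg(i)); in particular, the weighted space A_d = {v : ∑_i v_i² deg(i) < ∞} with norm ‖v‖_d = (∑_i v_i² deg(i))^{1/2} is closed under the product v · w = u, and each left multiplication L_v is a bounded operator on A_d with ‖L_v w‖_d ≤ ‖v‖ ‖w‖_d, where ‖v‖ is the unweighted ℓ² norm. -/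
/-!
Since `a k i ∈ {0, 1}`, Cauchy–Schwarz gives for every `k`
`u_k² deg k = (∑_i v_i (w_i a_{ki}))² ≤ (∑_i v_i²) (∑_i w_i² a_{ki})`
(`sq_tsum_mul_le`, with `a_{ki}² = a_{ki}`). Summing over `k` and exchanging the two sums of
nonnegative terms turns the last factor into `∑_i w_i² ∑_k a_{ki} = ∑_i w_i² deg i`.
The hypothesis `1 ≤ deg` provides the convergence of `∑ v_i²` and `∑ w_i²`.
-/

noncomputable section

theorem summable_mul_of_sq {f g : ℕ → ℝ} (hf : Summable fun i => f i ^ 2)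
    (hg : Summable fun i => g i ^ 2) : Summable fun i => f i * g i := by
  refine Summable.of_norm_bounded (hf.add hg) fun i => ?_
  rw [Real.norm_eq_abs, abs_le]
  constructor <;> nlinarith [sq_nonneg (f i + g i), sq_nonneg (f i - g i), sq_nonneg (f i),
    sq_nonneg (g i)]

/-- The Cauchy–Schwarz inequality for square-summable real sequences. -/
theorem sq_tsum_mul_le {f g : ℕ → ℝ} (hf : Summable fun i => f i ^ 2)
    (hg : Summable fun i => g i ^ 2) :
    (∑' i, f i * g i) ^ 2 ≤ (∑' i, f i ^ 2) * ∑' i, g i ^ 2 :=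
  le_of_tendsto_of_tendsto' ((summable_mul_of_sq hf hg).hasSum.pow 2)
    (Filter.Tendsto.mul hf.hasSum hg.hasSum)
    fun s => Finset.sum_mul_sq_le_sq_mul_sq s f g

/-- let `G` be a locally finite graph on ℕ with all degrees ≥ 1. For
sequences `v, w` in the weighted space `A_d` (i.e. `∑ v_i² deg(i) < ∞`,
`∑ w_i² deg(i) < ∞`), the product `u_k = ∑_i v_i w_i a_{ki}/deg(k)^{1/2}` is defined by
convergent series and satisfies `∑_k u_k² deg(k) ≤ (∑_i v_i²)·(∑_i w_i² deg(i))`; hence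
`A_d` is closed under the product and `‖L_v w‖_d ≤ ‖v‖ ‖w‖_d` (with `‖v‖` the unweighted
ℓ² norm). -/
theorem weighted_evolution_algebra_product_bound
    (a : ℕ → ℕ → ℝ)
    (hval : ∀ k i, a k i = 0 ∨ a k i = 1)
    (hsym : ∀ k i, a k i = a i k)
    (hloop : ∀ i, a i i = 0)
    (hlf : ∀ i, Summable fun k => a k i)
    (hdeg : ∀ i, 1 ≤ deg a i)
    (v w : ℕ → ℝ)
    (hv : Summable fun i => v i ^ 2 * deg a i)
    (hw : Summable fun i => w i ^ 2 * deg a i) :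
    (∀ k, Summable fun i => v i * w i * a k i / Real.sqrt (deg a k)) ∧
    (Summable fun k =>
      (∑' i, v i * w i * a k i / Real.sqrt (deg a k)) ^ 2 * deg a k) ∧
    (∑' k, (∑' i, v i * w i * a k i / Real.sqrt (deg a k)) ^ 2 * deg a k ≤
      (∑' i, v i ^ 2) * (∑' i, w i ^ 2 * deg a i)) ∧
    (Real.sqrt (∑' k, (∑' i, v i * w i * a k i / Real.sqrt (deg a k)) ^ 2 * deg a k) ≤
      Real.sqrt (∑' i, v i ^ 2) * Real.sqrt (∑' i, w i ^ 2 * deg a i)) := by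
  have hsq : ∀ x : ℕ → ℝ, Summable (fun i => x i ^ 2 * deg a i) → Summable fun i => x i ^ 2 :=
    fun x hx => Summable.of_nonneg_of_le (fun i => sq_nonneg _)
      (fun i => le_mul_of_one_le_right (sq_nonneg _) (hdeg i)) hx
  have hv2 := hsq v hv
  have hw2 := hsq w hw
  have ha0 : ∀ k i, 0 ≤ a k i := fun k i => by rcases hval k i with h | h <;> simp [h]
  have hwa : ∀ k i, (w i * a k i) ^ 2 = w i ^ 2 * a k i := fun k i => by
    rcases hval k i with h | h <;> simp [h]
  have hwas : ∀ k, Summable fun i => (w i * a k i) ^ 2 := fun k =>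
    Summable.of_nonneg_of_le (fun i => sq_nonneg _)
      (fun i => by rcases hval k i with h | h <;> simp [h, sq_nonneg]) hw2
  have hrow : ∀ i, ∑' k, w i ^ 2 * a k i = w i ^ 2 * deg a i := fun i => by
    rw [tsum_mul_left, deg]
  have hprod : Summable (Function.uncurry fun i k => w i ^ 2 * a k i) := by
    have h0 : 0 ≤ Function.uncurry fun i k => w i ^ 2 * a k i := by
      rintro ⟨i, k⟩
      exact mul_nonneg (sq_nonneg (w i)) (ha0 k i)
    rw [summable_prod_of_nonneg h0]
    refine ⟨fun i => (hlf i).mul_left (w i ^ 2), ?_⟩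
    simpa only [Function.uncurry_apply_pair, hrow] using hw
  have hcol : Summable fun k => ∑' i, w i ^ 2 * a k i := hprod.prod_symm.prod
  have hcomm : ∑' k, ∑' i, w i ^ 2 * a k i = ∑' i, w i ^ 2 * deg a i := by
    rw [hprod.tsum_comm]
    exact tsum_congr hrow
  have hterm : ∀ k, (∑' i, v i * w i * a k i / Real.sqrt (deg a k)) ^ 2 * deg a k ≤
      (∑' i, v i ^ 2) * ∑' i, w i ^ 2 * a k i := fun k => by
    have hpos : 0 < deg a k := lt_of_lt_of_le one_pos (hdeg k)
    have hcs := sq_tsum_mul_le hv2 (hwas k)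
    simp only [hwa, ← mul_assoc] at hcs
    rwa [tsum_div_const, div_pow, Real.sq_sqrt hpos.le, div_mul_cancel₀ _ hpos.ne']
  have hsum : Summable fun k =>
      (∑' i, v i * w i * a k i / Real.sqrt (deg a k)) ^ 2 * deg a k :=
    Summable.of_nonneg_of_le
      (fun k => mul_nonneg (sq_nonneg _) (zero_le_one.trans (hdeg k))) hterm (hcol.mul_left (∑' i, v i ^ 2))
  have hle : ∑' k, (∑' i, v i * w i * a k i / Real.sqrt (deg a k)) ^ 2 * deg a k ≤
      (∑' i, v i ^ 2) * (∑' i, w i ^ 2 * deg a i) := by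
    rw [← hcomm, ← tsum_mul_left]
    exact hsum.tsum_le_tsum hterm (hcol.mul_left (∑' i, v i ^ 2))
  refine ⟨fun k => ?_, hsum, hle, ?_⟩
  · simpa only [mul_assoc] using (summable_mul_of_sq hv2 (hwas k)).div_const (Real.sqrt (deg a k))
  · rw [← Real.sqrt_mul (tsum_nonneg fun i => sq_nonneg _)]
    exact Real.sqrt_le_sqrt hle
end
end
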